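/- Let u, v be information structures and let garblings q₁, q₂ ∈ 𝒬 attain the minimum of ‖q₁.u − v.q₂‖ (which equals sup_{g∈𝒢}(val(v,g) − val(u,g))). For any payoff function g ∈ 𝒢: if σ is an optimal behavior strategy of player 1 in Γ(v,g), then σ.q₁, defined by (σ.q₁)(c) = Σ_{c'} q₁(c)({c'})·σ(c'), is 2d(u,v)-optimal for player 1 in Γ(u,g); and if τ is optimal for player 2 in Γ(u,g), then τ.q₂ is 2d(u,v)-optimal for player 2 in Γ(v,g). (A strategy σ of player 1 is ε-optimal in Γ(u,g) if against every strategy τ of player 2 its expected payoff is at least val(u,g) − ε, and symmetrically for player 2.) -/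

import Mathlib

open scoped BigOperators ENNReal

namespace ValueDistance

/-- An information structure: a probability distribution on `K × ℕ × ℕ`
(state, signal of player 1, signal of player 2). -/
abbrev InfoStruct (K : Type) := PMF (K × ℕ × ℕ)

/-- A behavior strategy / garbling : a map `ℕ → Δ(ℕ)`. -/
abbrev Garbling : Type := ℕ → PMF ℕ

variable {K : Type}

/-- `g` is a payoff function with action bound `L` : values in `[-1,1]`,
`g k i j = -1` when `i ≥ L`, and `g k i j = 1` when `i < L` and `j ≥ L`. -/
def IsPayoffL (L : ℕ) (g : K → ℕ → ℕ → ℝ) : Prop :=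
  (∀ k i j, g k i j ∈ Set.Icc (-1 : ℝ) 1) ∧
  (∀ k i j, L ≤ i → g k i j = -1) ∧
  (∀ k i j, i < L → L ≤ j → g k i j = 1)

/-- `g` belongs to the set `𝒢` of payoff functions. -/
def IsPayoff (g : K → ℕ → ℕ → ℝ) : Prop := ∃ L, IsPayoffL L g

/-- `g` belongs to the set `𝒢₁` of single-agent (player 1) problems. -/
def IsPayoff1 (g : K → ℕ → ℕ → ℝ) : Prop :=
  IsPayoff g ∧ ∀ k i j j', g k i j = g k i j'

/-- Expected payoff in the Bayesian game `Γ(u,g)` when player 1 uses the behavior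
strategy `σ` and player 2 uses `τ`. -/
noncomputable def payoff (u : InfoStruct K) (g : K → ℕ → ℕ → ℝ)
    (σ τ : Garbling) : ℝ :=
  ∑' (x : K × ℕ × ℕ) (i : ℕ) (j : ℕ),
    (u x).toReal * (σ x.2.1 i).toReal * (τ x.2.2 j).toReal * g x.1 i j

/-- The value `val(u,g)` of the zero-sum Bayesian game `Γ(u,g)`
(the common value of `sup inf` and `inf sup` of the expected payoff;
we take `sup inf` as the definition). -/
noncomputable def val (u : InfoStruct K) (g : K → ℕ → ℕ → ℝ) : ℝ :=
  ⨆ σ : Garbling, ⨅ τ : Garbling, payoff u g σ τ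

/-- Total variation distance `‖u − v‖`. -/
noncomputable def tv {α : Type} (u v : PMF α) : ℝ :=
  ∑' x : α, |(u x).toReal - (v x).toReal|

/-- `q.u` : player 1's signal garbled through `q`. -/
noncomputable def garbleLeft (q : Garbling) (u : InfoStruct K) : InfoStruct K :=
  u.bind (fun x => (q x.2.1).map (fun c => (x.1, c, x.2.2)))

/-- `u.q` : player 2's signal garbled through `q`. -/
noncomputable def garbleRight (u : InfoStruct K) (q : Garbling) : InfoStruct K :=
  u.bind (fun x => (q x.2.2).map (fun d => (x.1, x.2.1, d)))

/-- The value-based distance `d(u,v) = sup_{g ∈ 𝒢} |val(u,g) − val(v,g)|`. -/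
noncomputable def dVal (u v : InfoStruct K) : ℝ :=
  ⨆ g : {g : K → ℕ → ℕ → ℝ // IsPayoff g}, |val u g.1 - val v g.1|

/-- The single-agent distance `d₁(u,v) = sup_{g ∈ 𝒢₁} |val(u,g) − val(v,g)|`. -/
noncomputable def d1 (u v : InfoStruct K) : ℝ :=
  ⨆ g : {g : K → ℕ → ℕ → ℝ // IsPayoff1 g}, |val u g.1 - val v g.1|

/-- Marginal of an information structure on `K × ℕ` (state, player 1's signal). -/
noncomputable def marg1 (u : InfoStruct K) : PMF (K × ℕ) :=
  u.map (fun x => (x.1, x.2.1))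

/-- Garbling of a single-agent information structure:
`(q.w)(k,c) = Σ_s w(k,s)·q(s)({c})`. -/
noncomputable def garble1 (q : Garbling) (w : PMF (K × ℕ)) : PMF (K × ℕ) :=
  w.bind (fun x => (q x.2).map (fun c => (x.1, c)))

/-- Marginal of an information structure on the states. -/
noncomputable def margK (u : InfoStruct K) : PMF K := u.map Prod.fst

/-- Marginal of an information structure on `K × ℕ` (state, player 2's signal). -/
noncomputable def margKD (u : InfoStruct K) : PMF (K × ℕ) :=
  u.map (fun x => (x.1, x.2.2))

/-- `σ.q` : on signal `c`, draw `c'` according to `q(c)` and play `σ(c')`. -/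
noncomputable def compGarble (σ q : Garbling) : Garbling :=
  fun c => (q c).bind σ

/-- `u ∈ 𝒰(L)` : both players' signals are `< L` with probability 1. -/
def InU (L : ℕ) (u : InfoStruct K) : Prop :=
  ∀ x : K × ℕ × ℕ, u x ≠ 0 → x.2.1 < L ∧ x.2.2 < L

/-- `q ∈ 𝒬(L)` : garbling with values supported on `{0,…,L−1}`. -/
def GarblingIn (L : ℕ) (q : Garbling) : Prop :=
  ∀ n m, q n m ≠ 0 → m < L

/-- The two players' signals are conditionally independent given the state:
`u(k)·u(k,c,d) = u(k,c)·u(k,d)` for all `k, c, d`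
(equivalently `u(c,d|k) = u(c|k)·u(d|k)` whenever `u(k) > 0`). -/
def CondIndep (u : InfoStruct K) : Prop :=
  ∀ (k : K) (c d : ℕ),
    (∑' y : ℕ × ℕ, u (k, y)) * u (k, c, d)
      = (∑' d' : ℕ, u (k, c, d')) * (∑' c' : ℕ, u (k, c', d))

end ValueDistance

namespace ValueDistance

/-!
A behavior strategy is itself a garbling: playing `(σ, τ)` in `Γ(u,g)` yields `⟨g, σ.u.τ⟩`, where
`⟨g, w⟩` is the `w`-expectation of `g` evaluated at the state and the two signals. Hence `(σ, τ.q₂)`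
in `Γ(v,g)` and `(σ.q₁, τ)` in `Γ(u,g)` amount to playing `(σ, τ)` under `v.q₂` and `q₁.u`, and the
two payoffs differ by at most `‖q₁.u − v.q₂‖`. It remains to see that the least such norm `δ` is at
most `d(u,v)`. Testing `v.q' − q.u` against the sign of the difference of the two distributions, cut
off at a level `L` so as to be a payoff function, gives for every `q, q'` some `g` with
`⟨g, v.q'⟩ − ⟨g, q.u⟩ ≥ δ − ε_L`, where `ε_L → 0` depends only on the marginals of `u` and `v` that
garbling leaves unchanged. The payoff functions with bound `L` form a compact convex set, so by
minimax one `g` serves all `q, q'`. By playing their signals, player 1 guarantees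
`inf_{q'} ⟨g, v.q'⟩` in `Γ(v,g)` and player 2 keeps the payoff in `Γ(u,g)` below `sup_q ⟨g, q.u⟩`;
thus `val(v,g) − val(u,g) ≥ δ − ε_L`.
-/

section Expectation

variable {α β : Type*}

/-- The expectation `∑ₐ p(a) F(a)` of a real function under a discrete distribution; it has the junk
value `0` if the series is not absolutely summable, which boundedness of `F` excludes. -/
noncomputable def expect (p : PMF α) (F : α → ℝ) : ℝ := ∑' a, (p a).toReal * F a

theorem hasSum_toReal (p : PMF α) : HasSum (fun a => (p a).toReal) 1 := by
  have h := ENNReal.hasSum_toReal p.tsum_coe_ne_top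
  rwa [← ENNReal.tsum_toReal_eq p.apply_ne_top, p.tsum_coe, ENNReal.toReal_one] at h

theorem norm_toReal_mul_le (p : PMF α) {F : α → ℝ} {B : ℝ} (hF : ∀ a, |F a| ≤ B) (a : α) :
    ‖(p a).toReal * F a‖ ≤ (p a).toReal * B := by
  rw [norm_mul, Real.norm_of_nonneg ENNReal.toReal_nonneg]
  exact mul_le_mul_of_nonneg_left (hF a) ENNReal.toReal_nonneg

theorem hasSum_expect (p : PMF α) {F : α → ℝ} {B : ℝ} (hF : ∀ a, |F a| ≤ B) :
    HasSum (fun a => (p a).toReal * F a) (expect p F) :=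
  (((hasSum_toReal p).summable.mul_right B).of_norm_bounded (norm_toReal_mul_le p hF)).hasSum

theorem abs_expect_le (p : PMF α) {F : α → ℝ} {B : ℝ} (hF : ∀ a, |F a| ≤ B) : |expect p F| ≤ B :=
  tsum_of_norm_bounded (by simpa using (hasSum_toReal p).mul_right B) (norm_toReal_mul_le p hF)

theorem expect_pure (a : α) (F : α → ℝ) : expect (PMF.pure a) F = F a := by
  rw [expect, tsum_eq_single a fun b hb => by simp [PMF.pure_apply, hb]]
  simp

theorem summable_toReal_mul_toReal (p : PMF α) (f : α → PMF β) :
    Summable fun x : α × β => (p x.1).toReal * (f x.1 x.2).toReal := by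
  refine (summable_prod_of_nonneg fun x =>
    mul_nonneg ENNReal.toReal_nonneg ENNReal.toReal_nonneg).2
    ⟨fun a => (hasSum_toReal (f a)).summable.mul_left (p a).toReal, ?_⟩
  simpa only [tsum_mul_left, (hasSum_toReal _).tsum_eq, mul_one] using (hasSum_toReal p).summable

theorem expect_bind (p : PMF α) (f : α → PMF β) {F : β → ℝ} {B : ℝ} (hF : ∀ b, |F b| ≤ B) :
    expect (p.bind f) F = expect p fun a => expect (f a) F := by
  have hs : Summable fun x : α × β => (p x.1).toReal * (f x.1 x.2).toReal * F x.2 := by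
    refine ((summable_toReal_mul_toReal p f).mul_right B).of_norm_bounded fun x => ?_
    rw [norm_mul, Real.norm_of_nonneg (by positivity)]
    exact mul_le_mul_of_nonneg_left (hF x.2) (by positivity)
  have bind_toReal (b : β) : (p.bind f b).toReal = ∑' a, (p a).toReal * (f a b).toReal := by
    rw [PMF.bind_apply,
      ENNReal.tsum_toReal_eq fun a => ENNReal.mul_ne_top (p.apply_ne_top a) ((f a).apply_ne_top b)]
    simp only [ENNReal.toReal_mul]
  calc expect (p.bind f) F = ∑' b, ∑' a, (p a).toReal * (f a b).toReal * F b := by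
        simp only [expect, bind_toReal, tsum_mul_right]
    _ = ∑' a, ∑' b, (p a).toReal * (f a b).toReal * F b :=
        Summable.tsum_comm (f := fun a b => (p a).toReal * (f a b).toReal * F b) hs
    _ = expect p fun a => expect (f a) F := by simp only [expect, mul_assoc, tsum_mul_left]

theorem expect_map (p : PMF α) (f : α → β) {F : β → ℝ} {B : ℝ} (hF : ∀ b, |F b| ≤ B) :
    expect (p.map f) F = expect p fun a => F (f a) := by
  rw [← PMF.bind_pure_comp, expect_bind p _ hF]
  simp only [Function.comp_apply, expect_pure]

theorem exists_pmf_bool_expect_eq {a b : ℝ} (ha : 0 ≤ a) (hb : 0 ≤ b) (hab : a + b = 1) :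
    ∃ w : PMF Bool, ∀ F : Bool → ℝ, expect w F = a * F true + b * F false := by
  have hsum : ∑ x : Bool, cond x (ENNReal.ofReal a) (ENNReal.ofReal b) = 1 := by
    simp [← ENNReal.ofReal_add ha hb, hab]
  exact ⟨PMF.ofFintype _ hsum, fun F => by simp [expect, ha, hb]⟩

/-- The probability, under a joint law of a state and a signal, that the signal is at least `L`. -/
noncomputable def tailProb (p : PMF (α × ℕ)) (L : ℕ) : ℝ :=
  expect p fun x => if L ≤ x.2 then 1 else 0

theorem tendsto_tailProb (p : PMF (α × ℕ)) :
    Filter.Tendsto (tailProb p) Filter.atTop (nhds 0) := by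
  have h : ∑' x, (p x).toReal * (0 : ℝ) = 0 := by simp
  rw [← h]
  refine tendsto_tsum_of_dominated_convergence (hasSum_toReal p).summable (fun x => ?_)
    (.of_forall fun L x => ?_)
  · refine tendsto_const_nhds.congr' ?_
    filter_upwards [Filter.eventually_gt_atTop x.2] with L hL
    rw [if_neg hL.not_ge]
  · dsimp only
    split_ifs <;> simp

end Expectation

section TotalVariation

variable {α : Type}

theorem hasSum_tv (p r : PMF α) : HasSum (fun x => |(p x).toReal - (r x).toReal|) (tv p r) :=
  ((hasSum_toReal p).summable.sub (hasSum_toReal r).summable).abs.hasSum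

theorem abs_expect_sub_expect_le (p r : PMF α) {F : α → ℝ} {B : ℝ} (hF : ∀ x, |F x| ≤ B) :
    |expect p F - expect r F| ≤ tv p r * B := by
  rw [← Real.norm_eq_abs, ← ((hasSum_expect p hF).sub (hasSum_expect r hF)).tsum_eq]
  refine tsum_of_norm_bounded ((hasSum_tv p r).mul_right B) fun x => ?_
  rw [← sub_mul, norm_mul]
  exact mul_le_mul_of_nonneg_left (hF x) (abs_nonneg _)

end TotalVariation

section Minimax

variable {E ι : Type*} [TopologicalSpace E] [AddCommGroup E] [Module ℝ E]

theorem convex_setOf_concaveOn_ge {G : Set E} {f : ι → E → ℝ}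
    (hmix : ∀ i j, ∀ a b : ℝ, 0 ≤ a → 0 ≤ b → a + b = 1 →
      ∃ k, ∀ x ∈ G, f k x ≤ a * f i x + b * f j x) :
    Convex ℝ {y : E → ℝ | UpperSemicontinuousOn y G ∧ ConcaveOn ℝ G y ∧
      ∃ i, ∀ x ∈ G, f i x ≤ y x} := by
  rintro y ⟨husc, hconc, i, hi⟩ y' ⟨husc', hconc', j, hj⟩ a b ha hb hab
  obtain ⟨k, hk⟩ := hmix i j a b ha hb hab
  have usc_mul {c : ℝ} (hc : 0 ≤ c) {z : E → ℝ} (hz : UpperSemicontinuousOn z G) :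
      UpperSemicontinuousOn (fun x => c * z x) G :=
    (continuous_const_mul c).comp_upperSemicontinuousOn hz (monotone_mul_left_of_nonneg hc)
  exact ⟨(usc_mul ha husc).add (usc_mul hb husc'), (hconc.smul ha).add (hconc'.smul hb), k,
    fun x hx => (hk x hx).trans (add_le_add (mul_le_mul_of_nonneg_left (hi x hx) ha)
      (mul_le_mul_of_nonneg_left (hj x hx) hb))⟩

/- Ky Fan's form of the minimax theorem: no linear structure on `ι`. Sion's theorem is applied to
the functions on `E` that dominate some `f i` on `G`, for the topology of pointwise convergence. -/
theorem exists_forall_le_of_convexLike [IsTopologicalAddGroup E] [ContinuousSMul ℝ E]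
    {G : Set E} {f : ι → E → ℝ} {m : ℝ} (hne : G.Nonempty) (hG : IsCompact G)
    (husc : ∀ i, UpperSemicontinuousOn (f i) G) (hconc : ∀ i, ConcaveOn ℝ G (f i))
    (hmix : ∀ i j, ∀ a b : ℝ, 0 ≤ a → 0 ≤ b → a + b = 1 →
      ∃ k, ∀ x ∈ G, f k x ≤ a * f i x + b * f j x)
    (hm : ∀ i, ∃ x ∈ G, m ≤ f i x) : ∃ x ∈ G, ∀ i, m ≤ f i x := by
  by_contra! hcon
  have : Nonempty ι := ⟨(hcon _ hne.some_mem).choose⟩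
  choose! i hi using hcon
  obtain ⟨t, -, ht⟩ := hG.elim_nhdsWithin_subcover (fun x => {z | f (i x) z < m})
    fun x hx => husc (i x) x hx m (hi x hx)
  obtain ⟨y, ⟨-, -, j, hj⟩, hlt⟩ := Sion.exists_lt_iInf_of_lt_iInf_of_finite
    (f := fun x y => -y x) (t := -m) hne hG
    (fun y hy => hy.1.neg) (fun y hy => hy.2.1.neg.quasiconvexOn) (convex_setOf_concaveOn_ge hmix)
    (fun x _ => (continuous_apply x).neg.upperSemicontinuous.upperSemicontinuousOn _)
    (fun x _ => ConcaveOn.quasiconcaveOn ⟨convex_setOf_concaveOn_ge hmix, fun _ _ _ _ _ _ _ _ _ =>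
      le_of_eq (by simp only [Pi.add_apply, Pi.smul_apply, smul_eq_mul]; ring)⟩)
    (hconc (i hne.some)).1 (t.finite_toSet.image fun x => f (i x))
    (by rintro _ ⟨x, -, rfl⟩; exact ⟨husc _, hconc _, i x, fun _ _ => le_rfl⟩)
    (fun z hz => by
      obtain ⟨x, hxt, hxz⟩ := Set.mem_iUnion₂.1 (ht hz)
      exact ⟨_, ⟨x, hxt, rfl⟩, neg_lt_neg hxz⟩)
  obtain ⟨x, hx, hmx⟩ := hm j
  linarith [hlt x hx, hj x hx]

end Minimax

section Garbling

variable {K : Type}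

theorem garbleLeft_pure (u : InfoStruct K) : garbleLeft PMF.pure u = u := by
  simp [garbleLeft, PMF.pure_map]

theorem garbleRight_pure (u : InfoStruct K) : garbleRight u PMF.pure = u := by
  simp [garbleRight, PMF.pure_map]

theorem garbleLeft_compGarble (σ q : Garbling) (u : InfoStruct K) :
    garbleLeft (compGarble σ q) u = garbleLeft σ (garbleLeft q u) := by
  simp only [garbleLeft, compGarble, PMF.bind_bind, PMF.map_bind, PMF.bind_map, Function.comp_def]

theorem garbleRight_compGarble (u : InfoStruct K) (τ q : Garbling) :
    garbleRight u (compGarble τ q) = garbleRight (garbleRight u q) τ := by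
  simp only [garbleRight, compGarble, PMF.bind_bind, PMF.map_bind, PMF.bind_map, Function.comp_def]

theorem garbleRight_garbleLeft (q q' : Garbling) (u : InfoStruct K) :
    garbleRight (garbleLeft q u) q' = garbleLeft q (garbleRight u q') := by
  simp only [garbleLeft, garbleRight, ← PMF.bind_pure_comp, PMF.bind_bind, PMF.pure_bind,
    Function.comp_def]
  congr 1
  funext x
  exact PMF.bind_comm _ _ _

theorem marg1_garbleRight (u : InfoStruct K) (q : Garbling) :
    marg1 (garbleRight u q) = marg1 u := by
  simp only [marg1, garbleRight, ← PMF.bind_pure_comp, PMF.bind_bind, PMF.pure_bind,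
    PMF.bind_const, Function.comp_def]

theorem margKD_garbleLeft (q : Garbling) (u : InfoStruct K) :
    margKD (garbleLeft q u) = margKD u := by
  simp only [margKD, garbleLeft, ← PMF.bind_pure_comp, PMF.bind_bind, PMF.pure_bind,
    PMF.bind_const, Function.comp_def]

/-- The garbling that draws `i` from `w`, independently of the signal, and then applies `q i`; it
realizes convex combinations of garblings. -/
noncomputable def mixture {ι : Type*} (w : PMF ι) (q : ι → Garbling) : Garbling :=
  fun n => w.bind fun i => q i n

theorem garbleLeft_mixture {ι : Type*} (w : PMF ι) (q : ι → Garbling) (u : InfoStruct K) :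
    garbleLeft (mixture w q) u = w.bind fun i => garbleLeft (q i) u := by
  simp only [garbleLeft, mixture, PMF.map_bind]
  exact PMF.bind_comm _ _ _

theorem garbleRight_mixture {ι : Type*} (u : InfoStruct K) (w : PMF ι) (q : ι → Garbling) :
    garbleRight u (mixture w q) = w.bind fun i => garbleRight u (q i) := by
  simp only [garbleRight, mixture, PMF.map_bind]
  exact PMF.bind_comm _ _ _

end Garbling

section Payoff

variable {K : Type} {g : K → ℕ → ℕ → ℝ} {B : ℝ}

/-- The expected payoff `⟨g, u⟩` when both players play their own signals as actions. -/
noncomputable def truthfulPayoff (u : InfoStruct K) (g : K → ℕ → ℕ → ℝ) : ℝ :=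
  expect u fun x => g x.1 x.2.1 x.2.2

theorem payoff_eq_expect (u : InfoStruct K) (g : K → ℕ → ℕ → ℝ) (σ τ : Garbling) :
    payoff u g σ τ = expect u fun x => expect (σ x.2.1) fun i => expect (τ x.2.2) (g x.1 i) := by
  simp only [payoff, expect, mul_assoc, tsum_mul_left]

theorem payoff_eq_truthfulPayoff (u : InfoStruct K) (hg : ∀ k i j, |g k i j| ≤ B)
    (σ τ : Garbling) :
    payoff u g σ τ = truthfulPayoff (garbleRight (garbleLeft σ u) τ) g := by
  have hg' (x : K × ℕ × ℕ) : |g x.1 x.2.1 x.2.2| ≤ B := hg _ _ _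
  have hτ (x : K × ℕ × ℕ) : |expect (τ x.2.2) (g x.1 x.2.1)| ≤ B := abs_expect_le _ (hg _ _)
  simp only [truthfulPayoff, garbleRight, garbleLeft, expect_bind _ _ hg', expect_map _ _ hg',
    expect_bind _ _ hτ, expect_map _ _ hτ, payoff_eq_expect]

theorem payoff_compGarble_left (u : InfoStruct K) (hg : ∀ k i j, |g k i j| ≤ B)
    (q σ τ : Garbling) : payoff u g (compGarble σ q) τ = payoff (garbleLeft q u) g σ τ := by
  rw [payoff_eq_truthfulPayoff _ hg, payoff_eq_truthfulPayoff _ hg, garbleLeft_compGarble]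

theorem payoff_compGarble_right (u : InfoStruct K) (hg : ∀ k i j, |g k i j| ≤ B)
    (q σ τ : Garbling) : payoff u g σ (compGarble τ q) = payoff (garbleRight u q) g σ τ := by
  rw [payoff_eq_truthfulPayoff _ hg, payoff_eq_truthfulPayoff _ hg, garbleRight_compGarble,
    garbleRight_garbleLeft]

theorem payoff_pure_left (u : InfoStruct K) (hg : ∀ k i j, |g k i j| ≤ B) (q : Garbling) :
    payoff u g PMF.pure q = truthfulPayoff (garbleRight u q) g := by
  rw [payoff_eq_truthfulPayoff u hg, garbleLeft_pure]

theorem payoff_pure_right (u : InfoStruct K) (hg : ∀ k i j, |g k i j| ≤ B) (q : Garbling) :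
    payoff u g q PMF.pure = truthfulPayoff (garbleLeft q u) g := by
  rw [payoff_eq_truthfulPayoff u hg, garbleRight_pure]

theorem abs_payoff_le (u : InfoStruct K) (hg : ∀ k i j, |g k i j| ≤ B) (σ τ : Garbling) :
    |payoff u g σ τ| ≤ B := by
  rw [payoff_eq_truthfulPayoff u hg]
  exact abs_expect_le _ fun _ => hg _ _ _

theorem abs_payoff_sub_payoff_le (u v : InfoStruct K) (hg : ∀ k i j, |g k i j| ≤ B)
    (σ τ : Garbling) : |payoff u g σ τ - payoff v g σ τ| ≤ tv u v * B := by
  rw [payoff_eq_expect, payoff_eq_expect]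
  exact abs_expect_sub_expect_le u v fun _ => abs_expect_le _ fun _ => abs_expect_le _ (hg _ _)

theorem truthfulPayoff_add_smul (u : InfoStruct K) {g' : K → ℕ → ℕ → ℝ} {B' : ℝ}
    (hg : ∀ k i j, |g k i j| ≤ B) (hg' : ∀ k i j, |g' k i j| ≤ B') (a b : ℝ) :
    truthfulPayoff u (a • g + b • g') = a * truthfulPayoff u g + b * truthfulPayoff u g' := by
  have h := ((hasSum_expect u fun x => hg x.1 x.2.1 x.2.2).mul_left a).add
    ((hasSum_expect u fun x => hg' x.1 x.2.1 x.2.2).mul_left b)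
  refine (tsum_congr fun x => ?_).trans h.tsum_eq
  simp only [Pi.add_apply, Pi.smul_apply, smul_eq_mul]
  ring

theorem continuousOn_truthfulPayoff (u : InfoStruct K) (B : ℝ) :
    ContinuousOn (truthfulPayoff u) {g | ∀ k i j, |g k i j| ≤ B} :=
  continuousOn_tsum (fun _ => by fun_prop) ((hasSum_toReal u).summable.mul_right B)
    fun x _ hg => norm_toReal_mul_le u (F := fun x => _) (fun x => hg x.1 x.2.1 x.2.2) x

end Payoff

section Value

variable {K : Type} {g : K → ℕ → ℕ → ℝ} {B m : ℝ}

instance : Nonempty Garbling := ⟨PMF.pure⟩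

theorem bddBelow_range_payoff (u : InfoStruct K) (hg : ∀ k i j, |g k i j| ≤ B) (σ : Garbling) :
    BddBelow (Set.range (payoff u g σ)) :=
  ⟨-B, Set.forall_mem_range.2 fun τ => (abs_le.1 (abs_payoff_le u hg σ τ)).1⟩

theorem val_le (u : InfoStruct K) (hg : ∀ k i j, |g k i j| ≤ B) (τ : Garbling)
    (h : ∀ σ, payoff u g σ τ ≤ m) : val u g ≤ m :=
  ciSup_le fun σ => (ciInf_le (bddBelow_range_payoff u hg σ) τ).trans (h σ)

theorem le_val (u : InfoStruct K) (hg : ∀ k i j, |g k i j| ≤ B) (σ : Garbling)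
    (h : ∀ τ, m ≤ payoff u g σ τ) : m ≤ val u g := by
  refine (le_ciInf h).trans (le_ciSup (f := fun σ => ⨅ τ, payoff u g σ τ) ⟨B, ?_⟩ σ)
  exact Set.forall_mem_range.2 fun σ => (ciInf_le (bddBelow_range_payoff u hg σ) PMF.pure).trans
    (abs_le.1 (abs_payoff_le u hg σ PMF.pure)).2

theorem abs_val_le (u : InfoStruct K) (hg : ∀ k i j, |g k i j| ≤ B) : |val u g| ≤ B :=
  abs_le.2 ⟨le_val u hg PMF.pure fun τ => (abs_le.1 (abs_payoff_le u hg PMF.pure τ)).1,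
    val_le u hg PMF.pure fun σ => (abs_le.1 (abs_payoff_le u hg σ PMF.pure)).2⟩

theorem le_val_sub_val (u v : InfoStruct K) (hg : ∀ k i j, |g k i j| ≤ B)
    (h : ∀ q q', m ≤ truthfulPayoff (garbleRight v q') g - truthfulPayoff (garbleLeft q u) g) :
    m ≤ val v g - val u g := by
  refine le_sub_comm.1 (val_le u hg PMF.pure fun q => le_sub_comm.1 ?_)
  rw [le_sub_iff_add_le]
  refine le_val v hg PMF.pure fun q' => ?_
  rw [payoff_pure_right u hg, payoff_pure_left v hg]
  linarith [h q q']

theorem IsPayoffL.abs_le_one {L : ℕ} (hg : IsPayoffL L g) (k : K) (i j : ℕ) : |g k i j| ≤ 1 :=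
  abs_le.2 (hg.1 k i j)

theorem IsPayoff.abs_le_one (hg : IsPayoff g) (k : K) (i j : ℕ) : |g k i j| ≤ 1 :=
  hg.choose_spec.abs_le_one k i j

theorem abs_val_sub_val_le_dVal (u v : InfoStruct K) (hg : IsPayoff g) :
    |val u g - val v g| ≤ dVal u v := by
  refine le_ciSup (f := fun g : {g : K → ℕ → ℕ → ℝ // IsPayoff g} => |val u g.1 - val v g.1|)
    ⟨1 + 1, Set.forall_mem_range.2 fun g => ?_⟩ ⟨g, hg⟩
  exact (abs_sub _ _).trans
    (add_le_add (abs_val_le u g.2.abs_le_one) (abs_val_le v g.2.abs_le_one))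

end Value

section PayoffSet

variable {K : Type}

theorem convex_setOf_isPayoffL (L : ℕ) : Convex ℝ {g : K → ℕ → ℕ → ℝ | IsPayoffL L g} := by
  intro g hg g' hg' a b ha hb hab
  refine ⟨fun k i j => convex_Icc (-1 : ℝ) 1 (hg.1 k i j) (hg'.1 k i j) ha hb hab,
    fun k i j hi => ?_, fun k i j hi hj => ?_⟩
  · simp only [Pi.add_apply, Pi.smul_apply, smul_eq_mul, hg.2.1 k i j hi, hg'.2.1 k i j hi]
    linarith
  · simp only [Pi.add_apply, Pi.smul_apply, smul_eq_mul, hg.2.2 k i j hi hj, hg'.2.2 k i j hi hj]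
    linarith

theorem isClosed_setOf_isPayoffL (L : ℕ) : IsClosed {g : K → ℕ → ℕ → ℝ | IsPayoffL L g} := by
  have hcont (k : K) (i j : ℕ) : Continuous fun g : K → ℕ → ℕ → ℝ => g k i j := by fun_prop
  simp only [IsPayoffL, Set.ofPred_and, Set.ofPred_forall]
  refine .inter ?_ (.inter ?_ ?_) <;>
    refine isClosed_iInter fun k => isClosed_iInter fun i => isClosed_iInter fun j => ?_
  · exact isClosed_Icc.preimage (hcont k i j)
  · exact isClosed_iInter fun _ => isClosed_eq (hcont k i j) continuous_const
  · exact isClosed_iInter fun _ => isClosed_iInter fun _ =>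
      isClosed_eq (hcont k i j) continuous_const

theorem isCompact_setOf_isPayoffL (L : ℕ) : IsCompact {g : K → ℕ → ℕ → ℝ | IsPayoffL L g} := by
  refine IsCompact.of_isClosed_subset (isCompact_univ_pi fun _ => isCompact_univ_pi fun _ =>
    isCompact_univ_pi fun _ => isCompact_Icc (a := (-1 : ℝ)) (b := 1))
    (isClosed_setOf_isPayoffL L) fun g hg => ?_
  exact fun k _ i _ j _ => hg.1 k i j

/-- The sign of `p - r`, modified outside the square of actions below `L` so as to be a payoff
function with action bound `L`. -/
noncomputable def signPayoff (L : ℕ) (p r : InfoStruct K) (k : K) (i j : ℕ) : ℝ :=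
  if L ≤ i then -1 else if L ≤ j then 1 else
    if (r (k, i, j)).toReal ≤ (p (k, i, j)).toReal then 1 else -1

theorem isPayoffL_signPayoff (L : ℕ) (p r : InfoStruct K) : IsPayoffL L (signPayoff L p r) := by
  refine ⟨fun k i j => ?_, fun k i j hi => if_pos hi, fun k i j hi hj => ?_⟩
  · unfold signPayoff
    split_ifs <;> norm_num
  · rw [signPayoff, if_neg hi.not_ge, if_pos hj]

theorem tv_le_truthfulPayoff_signPayoff (L : ℕ) (p r : InfoStruct K) :
    tv r p ≤ truthfulPayoff p (signPayoff L p r) - truthfulPayoff r (signPayoff L p r)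
      + 2 * tailProb (marg1 p) L + 2 * tailProb (margKD r) L := by
  have abs_ite_le (P : Prop) [Decidable P] : |if P then (1 : ℝ) else 0| ≤ 1 := by
    split_ifs <;> norm_num
  have hsign (w : InfoStruct K) := hasSum_expect w fun x =>
    (isPayoffL_signPayoff L p r).abs_le_one x.1 x.2.1 x.2.2
  rw [tailProb, tailProb, marg1, margKD, expect_map p _ fun x : K × ℕ => abs_ite_le (L ≤ x.2),
    expect_map r _ fun x : K × ℕ => abs_ite_le (L ≤ x.2)]
  refine hasSum_le ?_ (hasSum_tv r p) ((((hsign p).sub (hsign r)).add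
    ((hasSum_expect p fun x => abs_ite_le (L ≤ x.2.1)).mul_left 2)).add
    ((hasSum_expect r fun x => abs_ite_le (L ≤ x.2.2)).mul_left 2))
  rintro ⟨k, i, j⟩
  have hp : 0 ≤ (p (k, i, j)).toReal := ENNReal.toReal_nonneg
  have hr : 0 ≤ (r (k, i, j)).toReal := ENNReal.toReal_nonneg
  rw [abs_le']
  simp only [signPayoff]
  constructor <;> split_ifs <;> linarith

end PayoffSet

section Duality

variable {K : Type} {δ : ℝ}

/-- The gain `⟨g, v.q'⟩ − ⟨g, q.u⟩` of a pair `(q, q')` of garblings. -/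
noncomputable def payoffGap (u v : InfoStruct K) (q : Garbling × Garbling)
    (g : K → ℕ → ℕ → ℝ) : ℝ :=
  truthfulPayoff (garbleRight v q.2) g - truthfulPayoff (garbleLeft q.1 u) g

theorem continuousOn_payoffGap (u v : InfoStruct K) (q : Garbling × Garbling) (B : ℝ) :
    ContinuousOn (payoffGap u v q) {g | ∀ k i j, |g k i j| ≤ B} :=
  (continuousOn_truthfulPayoff _ B).sub (continuousOn_truthfulPayoff _ B)

theorem concaveOn_payoffGap (u v : InfoStruct K) (q : Garbling × Garbling) (L : ℕ) :
    ConcaveOn ℝ {g | IsPayoffL L g} (payoffGap u v q) := by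
  refine ⟨convex_setOf_isPayoffL L, fun g (hg : IsPayoffL L g) g' (hg' : IsPayoffL L g')
    a b _ _ _ => le_of_eq ?_⟩
  simp only [payoffGap, smul_eq_mul, truthfulPayoff_add_smul _ hg.abs_le_one hg'.abs_le_one]
  ring

theorem exists_payoffGap_eq_mul_add_mul (u v : InfoStruct K) (q r : Garbling × Garbling)
    {a b : ℝ} (ha : 0 ≤ a) (hb : 0 ≤ b) (hab : a + b = 1) :
    ∃ s, ∀ (g : K → ℕ → ℕ → ℝ) (B : ℝ), (∀ k i j, |g k i j| ≤ B) →
      payoffGap u v s g = a * payoffGap u v q g + b * payoffGap u v r g := by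
  obtain ⟨w, hw⟩ := exists_pmf_bool_expect_eq ha hb hab
  refine ⟨(mixture w (cond · q.1 r.1), mixture w (cond · q.2 r.2)), fun g B hg => ?_⟩
  have hg' (x : K × ℕ × ℕ) : |g x.1 x.2.1 x.2.2| ≤ B := hg _ _ _
  simp only [payoffGap, truthfulPayoff, garbleLeft_mixture, garbleRight_mixture,
    expect_bind _ _ hg', hw, cond_true, cond_false]
  ring

theorem exists_isPayoffL_forall_le_payoffGap (u v : InfoStruct K) (L : ℕ)
    (hδ : ∀ q q' : Garbling, δ ≤ tv (garbleLeft q u) (garbleRight v q')) :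
    ∃ g, IsPayoffL L g ∧ ∀ q,
      δ - 2 * tailProb (marg1 v) L - 2 * tailProb (margKD u) L ≤ payoffGap u v q g := by
  refine exists_forall_le_of_convexLike ⟨_, isPayoffL_signPayoff L u v⟩
    (isCompact_setOf_isPayoffL L)
    (fun q => ((continuousOn_payoffGap u v q 1).mono
      fun g (hg : IsPayoffL L g) => hg.abs_le_one).upperSemicontinuousOn)
    (fun q => concaveOn_payoffGap u v q L) (fun q r a b ha hb hab => ?_) fun q => ?_
  · obtain ⟨s, hs⟩ := exists_payoffGap_eq_mul_add_mul u v q r ha hb hab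
    exact ⟨s, fun g (hg : IsPayoffL L g) => (hs g 1 hg.abs_le_one).le⟩
  · refine ⟨_, isPayoffL_signPayoff L (garbleRight v q.2) (garbleLeft q.1 u), ?_⟩
    have h := tv_le_truthfulPayoff_signPayoff L (garbleRight v q.2) (garbleLeft q.1 u)
    rw [marg1_garbleRight, margKD_garbleLeft] at h
    rw [payoffGap]
    linarith [hδ q.1 q.2]

theorem le_dVal_of_forall_le_tv (u v : InfoStruct K)
    (hδ : ∀ q q' : Garbling, δ ≤ tv (garbleLeft q u) (garbleRight v q')) : δ ≤ dVal u v := by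
  have truncated (L : ℕ) :
      δ - 2 * tailProb (marg1 v) L - 2 * tailProb (margKD u) L ≤ dVal u v := by
    obtain ⟨g, hg, hgap⟩ := exists_isPayoffL_forall_le_payoffGap u v L hδ
    calc _ ≤ val v g - val u g := le_val_sub_val u v hg.abs_le_one fun q q' => hgap (q, q')
      _ ≤ |val u g - val v g| := by rw [abs_sub_comm]; exact le_abs_self _
      _ ≤ dVal u v := abs_val_sub_val_le_dVal u v ⟨L, hg⟩
  have hlim := ((tendsto_tailProb (marg1 v)).const_mul 2).const_sub δ |>.sub
    ((tendsto_tailProb (margKD u)).const_mul 2)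
  simp only [mul_zero, sub_zero] at hlim
  exact le_of_tendsto' hlim truncated

end Duality

theorem payoff_compGarble_le_add_tv {K : Type} (u v : InfoStruct K) {g : K → ℕ → ℕ → ℝ} {B : ℝ}
    (hg : ∀ k i j, |g k i j| ≤ B) (q₁ q₂ σ τ : Garbling) :
    payoff v g σ (compGarble τ q₂)
      ≤ payoff u g (compGarble σ q₁) τ + tv (garbleLeft q₁ u) (garbleRight v q₂) * B := by
  rw [payoff_compGarble_left u hg, payoff_compGarble_right v hg]
  linarith [neg_le_of_abs_le
    (abs_payoff_sub_payoff_le (garbleLeft q₁ u) (garbleRight v q₂) hg σ τ)]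

theorem optimal_strategies_transport_general {K : Type} (u v : InfoStruct K) (q₁ q₂ : Garbling)
    (hmin : ∀ q₁' q₂' : Garbling,
      tv (garbleLeft q₁ u) (garbleRight v q₂)
        ≤ tv (garbleLeft q₁' u) (garbleRight v q₂'))
    (g : K → ℕ → ℕ → ℝ) (hg : IsPayoff g) :
    (∀ σ : Garbling, (∀ τ : Garbling, val v g ≤ payoff v g σ τ) →
      ∀ τ : Garbling, val u g - 2 * dVal u v ≤ payoff u g (compGarble σ q₁) τ) ∧
    (∀ τ : Garbling, (∀ σ : Garbling, payoff u g σ τ ≤ val u g) →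
      ∀ σ : Garbling, payoff v g σ (compGarble τ q₂) ≤ val v g + 2 * dVal u v) := by
  have tv_le : tv (garbleLeft q₁ u) (garbleRight v q₂) ≤ dVal u v :=
    le_dVal_of_forall_le_tv u v hmin
  have val_sub_le : val u g - val v g ≤ dVal u v :=
    (le_abs_self _).trans (abs_val_sub_val_le_dVal u v hg)
  have swap := payoff_compGarble_le_add_tv u v hg.abs_le_one q₁ q₂
  refine ⟨fun σ hσ τ => ?_, fun τ hτ σ => ?_⟩
  · linarith [swap σ τ, hσ (compGarble τ q₂)]
  · linarith [swap σ τ, hτ (compGarble σ q₁)]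

/-- Garblings attaining the minimum of `‖q₁.u − v.q₂‖` transport optimal
strategies into `2d(u,v)`-optimal strategies: if `σ` is optimal for player 1
in `Γ(v,g)`, then `σ.q₁` is `2d(u,v)`-optimal for player 1 in `Γ(u,g)`;
if `τ` is optimal for player 2 in `Γ(u,g)`, then `τ.q₂` is `2d(u,v)`-optimal
for player 2 in `Γ(v,g)`. -/
theorem optimal_strategies_transport (K : Type) [Fintype K]
    (hK : 2 ≤ Fintype.card K) (u v : InfoStruct K) (q₁ q₂ : Garbling)
    (hmin : ∀ q₁' q₂' : Garbling,
      tv (garbleLeft q₁ u) (garbleRight v q₂)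
        ≤ tv (garbleLeft q₁' u) (garbleRight v q₂'))
    (g : K → ℕ → ℕ → ℝ) (hg : IsPayoff g) :
    (∀ σ : Garbling, (∀ τ : Garbling, val v g ≤ payoff v g σ τ) →
      ∀ τ : Garbling, val u g - 2 * dVal u v ≤ payoff u g (compGarble σ q₁) τ) ∧
    (∀ τ : Garbling, (∀ σ : Garbling, payoff u g σ τ ≤ val u g) →
      ∀ σ : Garbling, payoff v g σ (compGarble τ q₂) ≤ val v g + 2 * dVal u v) :=
  optimal_strategies_transport_general u v q₁ q₂ hmin g hg

end ValueDistance
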